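/- Let G be a finite simple graph of order n that is both edge-transitive and vertex-transitive. Then for every k ≥ 1, ϑ(K_k □ G) = min{ k·ϑ(G), n } = ϑ_k(G), where K_k □ G is the Cartesian product of the complete graph K_k with G. -/

import Mathlib

open Finset

/-- The sum of the `k` largest eigenvalues (counted with multiplicity) of a
Hermitian real matrix, realized as the supremum over all choices of
`min k n` eigenvalues of their sum. -/
noncomputable def sumKEig {V : Type*} [Fintype V] [DecidableEq V] (k : ℕ)
    (A : Matrix V V ℝ) (hA : A.IsHermitian) : ℝ :=
  sSup {x : ℝ | ∃ s : Finset V, s.card = min k (Fintype.card V) ∧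
    x = ∑ i ∈ s, hA.eigenvalues i}

/-- The generalized theta number `ϑ_k(G)`: the infimum of the sum of the `k`
largest eigenvalues over all real symmetric matrices `A` with `A i j = 1`
whenever `(i,j)` is not an edge of `G`. -/
noncomputable def gtheta {V : Type*} [Fintype V] [DecidableEq V]
    (k : ℕ) (G : SimpleGraph V) : ℝ :=
  sInf {x : ℝ | ∃ (A : Matrix V V ℝ) (hA : A.IsHermitian),
    (∀ i j, ¬ G.Adj i j → A i j = 1) ∧ x = sumKEig k A hA}

/-- A simple graph is edge-transitive if for every two edges there is a graph
automorphism mapping one to the other. -/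
def EdgeTransitive {V : Type*} (G : SimpleGraph V) : Prop :=
  ∀ e ∈ G.edgeSet, ∀ f ∈ G.edgeSet, ∃ φ : G ≃g G, Sym2.map (fun v => φ v) e = f

/-- A simple graph is vertex-transitive if its automorphism group acts
transitively on its vertices. -/
def VertexTransitive {V : Type*} (G : SimpleGraph V) : Prop :=
  ∀ u v : V, ∃ φ : G ≃g G, φ u = v

/-!
A strict vector `t`-coloring of a graph of order `n` gives `n ≤ t * ϑ(G)`: `ϑ(G)` is the least `t'`
for which the complement has a strict vector `t'`-coloring, and the Schur product theorem shows
`n ≤ t * t'` for colorings of a graph and of its complement.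

If `G` is vertex- and edge-transitive, of degree `d` and least eigenvalue `-τ`, the projection onto
the `-τ`-eigenspace is constant on the diagonal and on the edges, so it is proportional to a
coloring `Z` of `G` with `t = 1 + d / τ`. Hoffman's matrix is a coloring of the complement with
`t' = n τ / (d + τ) = n / t`, whence `ϑ(G) = n / t`. The Kronecker product of `Z` with a coloring of
`K_k` bounds `ϑ(K_k □ G)` from below. The bound for `ϑ_k(G)` comes from Ky Fan's principle:
tightness of the pair of colorings forces `(J + Z) / n ≤ 1`, so that after rescaling, or
interpolation with the identity, this matrix competes in the variational description of the sum of
the `k` largest eigenvalues.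
-/

section ThetaNumber

open Matrix
open scoped Kronecker MatrixOrder

local notation "J" => (Matrix.of 1 : Matrix _ _ ℝ)

variable {V W : Type*}

section PosSemidef

lemma posSemidef_allOnes [Finite V] : (J : Matrix V V ℝ).PosSemidef := by
  convert posSemidef_vecMulVec_self_star (1 : V → ℝ) using 1
  ext
  simp [vecMulVec_apply]

lemma posSemidef_of_isHermitian_of_mul_self [Fintype V] {E : Matrix V V ℝ}
    (hE : E.IsHermitian) (hEE : E * E = E) : E.PosSemidef := by
  simpa only [hE.eq, hEE] using posSemidef_conjTranspose_mul_self E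

lemma sum_sum_nonneg_of_posSemidef [Fintype V] {A : Matrix V V ℝ} (hA : A.PosSemidef) :
    0 ≤ ∑ u, ∑ v, A u v := by
  simpa [dotProduct, mulVec] using hA.dotProduct_mulVec_nonneg 1

lemma two_mul_abs_le_add_of_posSemidef [Finite V] {A : Matrix V V ℝ} (hA : A.PosSemidef)
    (u v : V) : 2 * |A u v| ≤ A u u + A v v := by
  have hsymm : A v u = A u v := hA.isHermitian.apply u v
  have hquad (s : ℝ) : 0 ≤ A u u + s * A u v + s * A u v + s * s * A v v := by
    have := (hA.submatrix ![u, v]).dotProduct_mulVec_nonneg ![1, s]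
    simp only [dotProduct, mulVec, Fin.sum_univ_two, Pi.star_apply, star_trivial, submatrix_apply,
      cons_val_zero, cons_val_one, hsymm] at this
    linarith
  have hadd := hquad 1
  have hsub := hquad (-1)
  rw [← le_div_iff₀' two_pos, abs_le]
  constructor <;> linarith

lemma posSemidef_sub_smul_allOnes [Fintype V] {N : Matrix V V ℝ}
    (hN : N.PosSemidef) {μ : ℝ} (hμ : N *ᵥ 1 = fun _ => μ) :
    (N - (μ / Fintype.card V) • J).PosSemidef := by
  classical
  obtain _ | _ := isEmpty_or_nonempty V
  · simpa [Subsingleton.elim (N - _) N] using hN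
  have hn : (Fintype.card V : ℝ) ≠ 0 := by simp
  have hrow (u : V) : ∑ v, N u v = μ := by simpa [mulVec, dotProduct] using congrFun hμ u
  have hcol (v : V) : ∑ u, N u v = μ := by
    rw [← hrow v]
    exact Finset.sum_congr rfl fun u _ => by simpa using hN.isHermitian.apply v u
  have hNJ : N * J = μ • J := by ext; simp [mul_apply, hrow]
  have hJN : J * N = μ • J := by ext; simp [mul_apply, hcol]
  have hJJ : (J * J : Matrix V V ℝ) = (Fintype.card V : ℝ) • J := by ext; simp [mul_apply]
  -- `N - (μ / n) J` is the compression of `N` to the orthogonal complement of the constants.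
  have hcompr := hN.conjTranspose_mul_mul_same ((1 : Matrix V V ℝ) - (Fintype.card V : ℝ)⁻¹ • J)
  convert hcompr using 1
  have hJ : (J : Matrix V V ℝ)ᴴ = J := posSemidef_allOnes.isHermitian
  simp only [conjTranspose_sub, conjTranspose_one, conjTranspose_smul, hJ, star_trivial, sub_mul,
    mul_sub, one_mul, mul_one, smul_mul_assoc, mul_smul_comm, hNJ, hJN, hJJ, smul_smul]
  rw [mul_assoc, mul_comm μ, inv_mul_cancel_left₀ hn, div_eq_mul_inv, mul_comm μ]
  module

lemma posSemidef_card_smul_one_sub_allOnes [Fintype V] [DecidableEq V] :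
    ((Fintype.card V : ℝ) • (1 : Matrix V V ℝ) - J).PosSemidef := by
  obtain _ | _ := isEmpty_or_nonempty V
  · convert PosSemidef.zero using 1
    exact Subsingleton.elim _ _
  simpa using posSemidef_sub_smul_allOnes (μ := Fintype.card V)
    (PosSemidef.one.smul (Nat.cast_nonneg (Fintype.card V)) :
      ((Fintype.card V : ℝ) • (1 : Matrix V V ℝ)).PosSemidef)
    (by ext; simp [smul_mulVec])

lemma posSemidef_sub_smul_one_iff [Fintype V] [DecidableEq V] {A : Matrix V V ℝ}
    (hA : A.IsHermitian) {c : ℝ} : (A - c • 1).PosSemidef ↔ ∀ i, c ≤ hA.eigenvalues i := by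
  have := algebraMap_le_iff_le_spectrum (r := c) hA.isSelfAdjoint
  simpa [hA.spectrum_real_eq_range_eigenvalues, Algebra.algebraMap_eq_smul_one, le_iff] using this

lemma posSemidef_smul_one_sub_iff [Fintype V] [DecidableEq V] {A : Matrix V V ℝ}
    (hA : A.IsHermitian) {c : ℝ} : (c • 1 - A).PosSemidef ↔ ∀ i, hA.eigenvalues i ≤ c := by
  have := le_algebraMap_iff_spectrum_le (r := c) hA.isSelfAdjoint
  simpa [hA.spectrum_real_eq_range_eigenvalues, Algebra.algebraMap_eq_smul_one, le_iff] using this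

end PosSemidef

section Eigenprojection

variable [Fintype V] [DecidableEq V] {A : Matrix V V ℝ} {μ : ℝ}

/-- The orthogonal projection onto the `μ`-eigenspace of a Hermitian matrix `A`, encoded through the
functional calculus of `A` so that it commutes with everything that commutes with `A`. -/
noncomputable def eigenprojection (A : Matrix V V ℝ) (μ : ℝ) : Matrix V V ℝ :=
  cfc (fun x => if x = μ then (1 : ℝ) else 0) A

lemma isHermitian_eigenprojection : (eigenprojection A μ).IsHermitian :=
  (cfc_predicate _ A : IsSelfAdjoint _)

lemma eigenprojection_mul_self :
    eigenprojection A μ * eigenprojection A μ = eigenprojection A μ := by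
  rw [eigenprojection, ← cfc_mul _ _ A (A.finite_real_spectrum.continuousOn _)
    (A.finite_real_spectrum.continuousOn _)]
  congr! 2 with x
  simp

lemma mul_eigenprojection (hA : A.IsHermitian) :
    A * eigenprojection A μ = μ • eigenprojection A μ := by
  have hcont (f : ℝ → ℝ) : ContinuousOn f (spectrum ℝ A) := A.finite_real_spectrum.continuousOn f
  nth_rw 1 [← cfc_id ℝ A hA.isSelfAdjoint]
  rw [eigenprojection, ← cfc_mul _ _ A (hcont _) (hcont _), ← cfc_smul μ _ A (hcont _)]
  congr! 2 with x
  simp +contextual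

lemma eigenprojection_ne_zero (hA : A.IsHermitian) (hμ : μ ∈ spectrum ℝ A) :
    eigenprojection A μ ≠ 0 := by
  have hcont (f : ℝ → ℝ) : ContinuousOn f (spectrum ℝ A) := A.finite_real_spectrum.continuousOn f
  rw [eigenprojection, ← cfc_zero ℝ A, Ne,
    cfc_eq_cfc_iff_eqOn hA.isSelfAdjoint (hcont _) (hcont _)]
  intro h
  simpa using h hμ

lemma eigenprojection_submatrix (hA : A.IsHermitian) {σ : Equiv.Perm V}
    (hσ : A.submatrix σ σ = A) :
    (eigenprojection A μ).submatrix σ σ = eigenprojection A μ := by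
  have hperm (B : Matrix V V ℝ) : Commute B (Equiv.toPEquiv σ).toMatrix ↔ B.submatrix σ σ = B := by
    rw [commute_iff_eq, PEquiv.mul_toMatrix_toPEquiv, PEquiv.toMatrix_toPEquiv_mul]
    refine ⟨fun h => ?_, fun h => ?_⟩
    · simpa using congrArg (·.submatrix id σ) h.symm
    · simpa using congrArg (·.submatrix id σ.symm) h.symm
  rw [← hperm] at hσ ⊢
  exact hA.isSelfAdjoint.commute_cfc hσ _

end Eigenprojection

section KyFan

variable [Fintype V]

lemma exists_finset_card_eq_forall_le (f : V → ℝ) {m : ℕ} (hm : m ≤ Fintype.card V) :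
    ∃ s : Finset V, #s = m ∧ ∃ t, (∀ i ∈ s, t ≤ f i) ∧ ∀ i ∉ s, f i ≤ t := by
  classical
  induction m with
  | zero =>
    obtain ⟨t, ht⟩ := (Set.finite_range f).bddAbove
    exact ⟨∅, rfl, t, by simp, fun i _ => ht ⟨i, rfl⟩⟩
  | succ m ih =>
    obtain ⟨s, hs, t, hle, hge⟩ := ih (by lia)
    have hne : sᶜ.Nonempty := by
      rw [← Finset.card_pos, Finset.card_compl]
      lia
    obtain ⟨a, ha, hmax⟩ := sᶜ.exists_max_image f hne
    rw [Finset.mem_compl] at ha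
    refine ⟨insert a s, by rw [Finset.card_insert_of_notMem ha, hs], f a, ?_, ?_⟩
    · simpa using fun i hi => (hge a ha).trans (hle i hi)
    · intro i hi
      rw [Finset.mem_insert, not_or] at hi
      exact hmax i (Finset.mem_compl.2 hi.2)

lemma exists_finset_card_eq_sum_mul_le (f x : V → ℝ) {m : ℕ} (hx0 : ∀ i, 0 ≤ x i)
    (hx1 : ∀ i, x i ≤ 1) (hxm : ∑ i, x i = m) :
    ∃ s : Finset V, #s = m ∧ ∑ i, f i * x i ≤ ∑ i ∈ s, f i := by
  classical
  have hm : m ≤ Fintype.card V := by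
    have := Finset.sum_le_sum fun i (_ : i ∈ univ) => hx1 i
    rw [hxm] at this
    simpa using this
  obtain ⟨s, hs, t, hle, hge⟩ := exists_finset_card_eq_forall_le f hm
  refine ⟨s, hs, ?_⟩
  calc ∑ i, f i * x i = ∑ i, (f i - t) * x i + t * #s := by
        simp only [sub_mul, Finset.sum_sub_distrib, ← Finset.mul_sum, hxm, hs, sub_add_cancel]
    _ ≤ ∑ i, (if i ∈ s then f i - t else 0) + t * #s := by
        gcongr with i
        split_ifs with hi
        · exact mul_le_of_le_one_right (sub_nonneg.2 (hle i hi)) (hx1 i)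
        · exact mul_nonpos_of_nonpos_of_nonneg (sub_nonpos.2 (hge i hi)) (hx0 i)
    _ = ∑ i ∈ s, f i := by simp [Finset.sum_sub_distrib, mul_comm]

variable [DecidableEq V] {A X : Matrix V V ℝ}

lemma trace_mul_eq_sum_eigenvalues_mul (hA : A.IsHermitian) (X : Matrix V V ℝ) :
    (A * X).trace = ∑ i, hA.eigenvalues i *
      ((hA.eigenvectorUnitary : Matrix V V ℝ)ᴴ * X * hA.eigenvectorUnitary) i i := by
  conv_lhs => rw [hA.spectral_theorem, Unitary.conjStarAlgAut_apply]
  rw [Matrix.mul_assoc, Matrix.mul_assoc, trace_mul_comm, Matrix.mul_assoc]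
  simp [trace, diagonal_mul, star_eq_conjTranspose]

lemma sum_eigenvalues_le_sumKEig (hA : A.IsHermitian) {k : ℕ} {s : Finset V}
    (hs : #s = min k (Fintype.card V)) : ∑ i ∈ s, hA.eigenvalues i ≤ sumKEig k A hA := by
  refine le_csSup ?_ ⟨s, hs, rfl⟩
  refine (Set.finite_range fun s : Finset V => ∑ i ∈ s, hA.eigenvalues i).bddAbove.mono ?_
  rintro _ ⟨s, -, rfl⟩
  exact ⟨s, rfl⟩

lemma sumKEig_le (hA : A.IsHermitian) {k : ℕ} {c : ℝ}
    (h : ∀ s : Finset V, #s ≤ k → ∑ i ∈ s, hA.eigenvalues i ≤ c) : sumKEig k A hA ≤ c := by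
  obtain ⟨s, -, hs⟩ := (univ : Finset V).exists_subset_card_eq (min_le_right k _)
  refine csSup_le ⟨_, s, hs, rfl⟩ ?_
  rintro _ ⟨s, hs, rfl⟩
  exact h s (hs ▸ min_le_left _ _)

lemma eigenvalues_le_sumKEig_one (hA : A.IsHermitian) (i : V) :
    hA.eigenvalues i ≤ sumKEig 1 A hA := by
  have hcard : #{i} = min 1 (Fintype.card V) := by
    rw [Finset.card_singleton, min_eq_left (Fintype.card_pos_iff.2 ⟨i⟩)]
  simpa using sum_eigenvalues_le_sumKEig hA hcard

/- Ky Fan's variational principle: in an eigenbasis of `A`, the diagonal of `X` is a system of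
weights in `[0, 1]`, and a weighted sum of the eigenvalues is largest when the weights sit on the
top ones. -/
lemma trace_mul_le_sumKEig (hA : A.IsHermitian) {k : ℕ} (hX : X.PosSemidef)
    (hX1 : (1 - X).PosSemidef) (htr : X.trace = (min k (Fintype.card V) : ℕ)) :
    (A * X).trace ≤ sumKEig k A hA := by
  set U := (hA.eigenvectorUnitary : Matrix V V ℝ)
  have hUU : U * Uᴴ = 1 := Unitary.coe_mul_star_self hA.eigenvectorUnitary
  have hUU' : Uᴴ * U = 1 := Unitary.coe_star_mul_self hA.eigenvectorUnitary
  have hnonneg (i : V) : 0 ≤ (Uᴴ * X * U) i i := (hX.conjTranspose_mul_mul_same U).diag_nonneg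
  have hle (i : V) : (Uᴴ * X * U) i i ≤ 1 := by
    have := (hX1.conjTranspose_mul_mul_same U).diag_nonneg (i := i)
    rwa [Matrix.mul_sub, Matrix.sub_mul, Matrix.mul_one, hUU', Matrix.sub_apply, one_apply_eq,
      sub_nonneg] at this
  have hsum : ∑ i, (Uᴴ * X * U) i i = (min k (Fintype.card V) : ℕ) := by
    change (Uᴴ * X * U).trace = _
    rw [trace_mul_cycle, hUU, Matrix.one_mul, htr]
  obtain ⟨s, hs, hle_s⟩ := exists_finset_card_eq_sum_mul_le hA.eigenvalues _ hnonneg hle hsum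
  rw [trace_mul_eq_sum_eigenvalues_mul hA]
  exact hle_s.trans (sum_eigenvalues_le_sumKEig hA hs)

lemma sumKEig_nonneg (hA : A.IsHermitian) (htr : 0 ≤ A.trace) (k : ℕ) : 0 ≤ sumKEig k A hA := by
  set c : ℝ := (min k (Fintype.card V) : ℕ) / (Fintype.card V : ℝ)
  have hc0 : 0 ≤ c := by positivity
  have hc1 : c ≤ 1 := div_le_one_of_le₀ (mod_cast min_le_right _ _) (Nat.cast_nonneg _)
  calc 0 ≤ (A * c • 1).trace := by simpa using mul_nonneg hc0 htr
    _ ≤ sumKEig k A hA := by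
      refine trace_mul_le_sumKEig hA (PosSemidef.one.smul hc0) ?_ ?_
      · simpa [sub_smul] using (PosSemidef.one (n := V) (R := ℝ)).smul (sub_nonneg.2 hc1)
      · obtain _ | _ := isEmpty_or_nonempty V
        · simp
        · simp [c]

lemma sumKEig_le_mul_sumKEig_one (hA : A.IsHermitian) (htr : 0 ≤ A.trace) (k : ℕ) :
    sumKEig k A hA ≤ k * sumKEig 1 A hA := by
  refine sumKEig_le hA fun s hs => ?_
  calc ∑ i ∈ s, hA.eigenvalues i ≤ #s • sumKEig 1 A hA :=
        Finset.sum_le_card_nsmul _ _ _ fun i _ => eigenvalues_le_sumKEig_one hA i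
    _ ≤ k * sumKEig 1 A hA := by
        rw [nsmul_eq_mul]
        gcongr
        exact sumKEig_nonneg hA htr 1

lemma sumKEig_le_trace (hA : A.PosSemidef) (k : ℕ) : sumKEig k A hA.isHermitian ≤ A.trace := by
  refine sumKEig_le hA.isHermitian fun s _ => ?_
  rw [hA.isHermitian.trace_eq_sum_eigenvalues]
  exact Finset.sum_le_univ_sum_of_nonneg hA.eigenvalues_nonneg

end KyFan

section Theta

variable [Fintype V] {G : SimpleGraph V} {A : Matrix V V ℝ} {k : ℕ}

lemma trace_eq_card_of_eq_one (hAG : ∀ u v, ¬G.Adj u v → A u v = 1) :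
    A.trace = Fintype.card V := by
  simp [trace, hAG]

variable [DecidableEq V]

lemma gtheta_le_sumKEig (hA : A.IsHermitian) (hAG : ∀ u v, ¬G.Adj u v → A u v = 1) :
    gtheta k G ≤ sumKEig k A hA := by
  refine csInf_le ⟨0, ?_⟩ ⟨A, hA, hAG, rfl⟩
  rintro _ ⟨B, hB, hBG, rfl⟩
  exact sumKEig_nonneg hB (trace_eq_card_of_eq_one hBG ▸ Nat.cast_nonneg _) k

lemma le_mul_gtheta {c x : ℝ} (hc : 0 ≤ c)
    (h : ∀ (A : Matrix V V ℝ) (hA : A.IsHermitian), (∀ u v, ¬G.Adj u v → A u v = 1) →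
      x ≤ c * sumKEig k A hA) :
    x ≤ c * gtheta k G := by
  rw [gtheta, ← smul_eq_mul, ← Real.sInf_smul_of_nonneg hc]
  refine le_csInf (Set.Nonempty.smul_set ⟨_, J, posSemidef_allOnes.isHermitian, by simp, rfl⟩) ?_
  rintro _ ⟨_, ⟨A, hA, hAG, rfl⟩, rfl⟩
  exact h A hA hAG

lemma le_gtheta {x : ℝ}
    (h : ∀ (A : Matrix V V ℝ) (hA : A.IsHermitian), (∀ u v, ¬G.Adj u v → A u v = 1) →
      x ≤ sumKEig k A hA) :
    x ≤ gtheta k G := by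
  simpa using le_mul_gtheta (zero_le_one' ℝ) (by simpa using h)

lemma gtheta_nonneg (k : ℕ) (G : SimpleGraph V) : 0 ≤ gtheta k G :=
  le_gtheta fun _ hA hAG =>
    sumKEig_nonneg hA (trace_eq_card_of_eq_one hAG ▸ Nat.cast_nonneg _) k

lemma gtheta_le_card (k : ℕ) (G : SimpleGraph V) : gtheta k G ≤ Fintype.card V := by
  have hJ : ∀ u v, ¬G.Adj u v → (J : Matrix V V ℝ) u v = 1 := fun _ _ _ => rfl
  calc gtheta k G ≤ sumKEig k J posSemidef_allOnes.isHermitian := gtheta_le_sumKEig _ hJ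
    _ ≤ (J : Matrix V V ℝ).trace := sumKEig_le_trace posSemidef_allOnes k
    _ = Fintype.card V := trace_eq_card_of_eq_one hJ

lemma gtheta_eq_zero_of_isEmpty [IsEmpty V] (k : ℕ) (G : SimpleGraph V) : gtheta k G = 0 :=
  le_antisymm (by simpa using gtheta_le_card k G) (gtheta_nonneg k G)

lemma gtheta_le_mul_gtheta_one (k : ℕ) (G : SimpleGraph V) : gtheta k G ≤ k * gtheta 1 G :=
  le_mul_gtheta k.cast_nonneg fun _ hA hAG => (gtheta_le_sumKEig hA hAG).trans
    (sumKEig_le_mul_sumKEig_one hA (trace_eq_card_of_eq_one hAG ▸ Nat.cast_nonneg _) k)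

end Theta

section StrictVectorColoring

/-- A strict vector `t`-coloring of `G` in the sense of Karger, Motwani and Sudan, given by `t - 1`
times the Gram matrix of the unit vectors assigned to the vertices: the vectors of adjacent vertices
have inner product `-1 / (t - 1)`. The scaling keeps the case `t = 1` of edgeless graphs
meaningful. -/
structure IsStrictVectorColoring (G : SimpleGraph V) (t : ℝ) (Z : Matrix V V ℝ) : Prop where
  posSemidef : Z.PosSemidef
  diag (v : V) : Z v v = t - 1
  adj {u v : V} (h : G.Adj u v) : Z u v = -1

namespace IsStrictVectorColoring

variable {G : SimpleGraph V} {H : SimpleGraph W} {t t' : ℝ} {Z N : Matrix V V ℝ}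
  {S : Matrix W W ℝ}

lemma one_le [Nonempty V] (hZ : IsStrictVectorColoring G t Z) : 1 ≤ t := by
  inhabit V
  simpa [hZ.diag] using hZ.posSemidef.diag_nonneg (i := (default : V))

lemma two_le_of_adj [Finite V] (hZ : IsStrictVectorColoring G t Z) {u v : V} (h : G.Adj u v) :
    2 ≤ t := by
  have := two_mul_abs_le_add_of_posSemidef hZ.posSemidef u v
  rw [hZ.diag, hZ.diag, hZ.adj h, abs_neg, abs_one] at this
  linarith

lemma mono [DecidableEq V] [Finite V] (hZ : IsStrictVectorColoring G t Z) (htt' : t ≤ t') :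
    IsStrictVectorColoring G t' (Z + (t' - t) • 1) where
  posSemidef := hZ.posSemidef.add (PosSemidef.one.smul (sub_nonneg.2 htt'))
  diag v := by simp [hZ.diag]
  adj h := by simp [hZ.adj h, h.ne]

lemma comap (hZ : IsStrictVectorColoring G t Z) (f : H →g G) :
    IsStrictVectorColoring H t (Z.submatrix f f) where
  posSemidef := hZ.posSemidef.submatrix f
  diag v := hZ.diag (f v)
  adj h := hZ.adj (f.map_adj h)

lemma top [Fintype V] [DecidableEq V] :
    IsStrictVectorColoring (⊤ : SimpleGraph V) (Fintype.card V)
      ((Fintype.card V : ℝ) • 1 - J) where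
  posSemidef := posSemidef_card_smul_one_sub_allOnes
  diag v := by simp
  adj h := by simp [h.ne]

lemma boxProd [Finite V] [Finite W] [Nonempty W] (hS : IsStrictVectorColoring H t S)
    (hZ : IsStrictVectorColoring G t Z) :
    IsStrictVectorColoring (H □ G) t ((t - 1)⁻¹ • S ⊗ₖ Z) where
  posSemidef := (hS.posSemidef.kronecker hZ.posSemidef).smul
    (inv_nonneg.2 (sub_nonneg.2 hS.one_le))
  diag v := by simp [hS.diag, hZ.diag, ← mul_assoc, inv_mul_mul_self]
  adj {u v} h := by
    rw [SimpleGraph.boxProd_adj] at h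
    rcases h with ⟨h, h'⟩ | ⟨h, h'⟩
    · have : t - 1 ≠ 0 := by linarith [hS.two_le_of_adj h]
      simp only [Matrix.smul_apply, kroneckerMap_apply, hS.adj h, h', hZ.diag, smul_eq_mul]
      field_simp
    · have : t - 1 ≠ 0 := by linarith [hZ.two_le_of_adj h]
      simp only [Matrix.smul_apply, kroneckerMap_apply, h', hS.diag, hZ.adj h, smul_eq_mul]
      field_simp

lemma compl_top_boxProd [Finite V] [Fintype W] [DecidableEq W]
    (hN : IsStrictVectorColoring Gᶜ t N) :
    IsStrictVectorColoring ((⊤ : SimpleGraph W) □ G)ᶜ (Fintype.card W * t)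
      ((Fintype.card W : ℝ) • (1 : Matrix W W ℝ) ⊗ₖ N +
        ((Fintype.card W : ℝ) • 1 - J) ⊗ₖ J) where
  posSemidef := ((PosSemidef.one.kronecker hN.posSemidef).smul (Nat.cast_nonneg _)).add
    (posSemidef_card_smul_one_sub_allOnes.kronecker posSemidef_allOnes)
  diag v := by
    simp only [Matrix.add_apply, Matrix.smul_apply, kroneckerMap_apply, one_apply_eq, hN.diag,
      smul_eq_mul, Matrix.sub_apply, of_apply, Pi.one_apply]
    ring
  adj {x y} h := by
    obtain ⟨a, u⟩ := x
    obtain ⟨b, v⟩ := y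
    rw [SimpleGraph.compl_adj, SimpleGraph.boxProd_adj] at h
    obtain rfl | hab := eq_or_ne a b
    · have hcompl : Gᶜ.Adj u v := by simpa using h
      simp only [Matrix.add_apply, Matrix.smul_apply, kroneckerMap_apply, one_apply_eq,
        hN.adj hcompl, smul_eq_mul, Matrix.sub_apply, of_apply, Pi.one_apply]
      ring
    · simp [hab]

lemma add_one_mul_add_one [DecidableEq V] (hZ : IsStrictVectorColoring G t Z)
    (hN : IsStrictVectorColoring Gᶜ t' N) (u v : V) :
    (N u v + 1) * (Z u v + 1) = if u = v then t * t' else 0 := by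
  split_ifs with huv
  · simp [← huv, hZ.diag, hN.diag, mul_comm]
  · by_cases hadj : G.Adj u v
    · simp [hZ.adj hadj]
    · simp [hN.adj (show Gᶜ.Adj u v from ⟨huv, hadj⟩)]

lemma sum_sum_hadamard_add [Fintype V] (hZ : IsStrictVectorColoring G t Z)
    (hN : IsStrictVectorColoring Gᶜ t' N) :
    ∑ u, ∑ v, (N ⊙ Z) u v + ∑ u, ∑ v, Z u v + ∑ u, ∑ v, N u v +
      Fintype.card V * Fintype.card V = Fintype.card V * (t * t') := by
  classical
  have hentry (u v : V) := hZ.add_one_mul_add_one hN u v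
  have hsum := Finset.sum_congr rfl fun u (_ : u ∈ univ) =>
    Finset.sum_congr rfl fun v (_ : v ∈ univ) => hentry u v
  simp only [add_one_mul, mul_add_one] at hsum
  simpa [Finset.sum_add_distrib, ← add_assoc] using hsum

lemma sum_sum_hadamard_nonneg [Fintype V] (hZ : IsStrictVectorColoring G t Z)
    (hN : IsStrictVectorColoring Gᶜ t' N) : 0 ≤ ∑ u, ∑ v, (N ⊙ Z) u v :=
  sum_sum_nonneg_of_posSemidef (hN.posSemidef.hadamard hZ.posSemidef)

lemma card_le_mul [Fintype V] [Nonempty V] (hZ : IsStrictVectorColoring G t Z)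
    (hN : IsStrictVectorColoring Gᶜ t' N) : Fintype.card V ≤ t * t' := by
  have hn : 0 < (Fintype.card V : ℝ) := by simp [Fintype.card_pos]
  refine le_of_mul_le_mul_left ?_ hn
  linarith [hZ.sum_sum_hadamard_add hN, hZ.sum_sum_hadamard_nonneg hN,
    sum_sum_nonneg_of_posSemidef hZ.posSemidef, sum_sum_nonneg_of_posSemidef hN.posSemidef]

variable [Fintype V] [DecidableEq V]

lemma of_sumKEig_one {A : Matrix V V ℝ} (hA : A.IsHermitian)
    (hAG : ∀ u v, ¬G.Adj u v → A u v = 1) :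
    IsStrictVectorColoring Gᶜ (sumKEig 1 A hA) (sumKEig 1 A hA • 1 - A) where
  posSemidef := (posSemidef_smul_one_sub_iff hA).2 (eigenvalues_le_sumKEig_one hA)
  diag v := by simp [hAG]
  adj {u v} h := by simp [h.ne, hAG u v h.2]

lemma card_le_mul_gtheta [Nonempty V] (hZ : IsStrictVectorColoring G t Z) :
    Fintype.card V ≤ t * gtheta 1 G :=
  le_mul_gtheta (zero_le_one.trans hZ.one_le) fun _ hA hAG =>
    hZ.card_le_mul (of_sumKEig_one hA hAG)

lemma gtheta_one_le [Nonempty V] (hN : IsStrictVectorColoring Gᶜ t N) : gtheta 1 G ≤ t := by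
  have hA : (t • 1 - N).IsHermitian :=
    (isHermitian_one.smul (.all t)).sub hN.posSemidef.isHermitian
  have hAG (u v : V) (h : ¬G.Adj u v) : (t • 1 - N) u v = 1 := by
    obtain rfl | huv := eq_or_ne u v
    · simp [hN.diag]
    · simp [huv, hN.adj (show Gᶜ.Adj u v from ⟨huv, h⟩)]
  refine (gtheta_le_sumKEig hA hAG).trans (sumKEig_le hA fun s hs => ?_)
  have hle := (posSemidef_smul_one_sub_iff hA).1 ((sub_sub_cancel (t • 1) N).symm ▸ hN.posSemidef)
  calc ∑ i ∈ s, hA.eigenvalues i ≤ #s • t := Finset.sum_le_card_nsmul _ _ _ fun i _ => hle i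
    _ ≤ 1 • t := nsmul_le_nsmul_left (zero_le_one.trans hN.one_le) hs
    _ = t := one_smul _ _

variable [Fintype W] [DecidableEq W]

lemma min_le_gtheta_top_boxProd [Nonempty V] [Nonempty W] (hZ : IsStrictVectorColoring G t Z) :
    min (Fintype.card W * (Fintype.card V / t)) (Fintype.card V) ≤
      gtheta 1 ((⊤ : SimpleGraph W) □ G) := by
  have hcol := (top.mono (le_max_right t (Fintype.card W))).boxProd
    (hZ.mono (le_max_left t (Fintype.card W)))
  have hcard := hcol.card_le_mul_gtheta
  have ht := hZ.one_le
  have hW : 0 < (Fintype.card W : ℝ) := by simp [Fintype.card_pos]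
  rw [Fintype.card_prod, Nat.cast_mul, ← div_le_iff₀' (by positivity)] at hcard
  refine le_trans ?_ hcard
  obtain h | h := le_total t (Fintype.card W)
  · simp [h, hW.ne']
  · simp [h, mul_div_assoc]

end IsStrictVectorColoring

variable [Fintype V] [DecidableEq V] [Nonempty V] [Fintype W] [DecidableEq W] [Nonempty W]

lemma gtheta_top_boxProd_le_mul (G : SimpleGraph V) :
    gtheta 1 ((⊤ : SimpleGraph W) □ G) ≤ Fintype.card W * gtheta 1 G :=
  le_mul_gtheta (Nat.cast_nonneg _) fun _ hA hAG =>
    (IsStrictVectorColoring.of_sumKEig_one hA hAG).compl_top_boxProd.gtheta_one_le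

lemma gtheta_top_boxProd_le_card (G : SimpleGraph V) :
    gtheta 1 ((⊤ : SimpleGraph W) □ G) ≤ Fintype.card V := by
  let snd : ((⊤ : SimpleGraph W) □ G)ᶜ →g (⊤ : SimpleGraph V) :=
    ⟨Prod.snd, fun {x y} h => by
      rintro (hxy : x.2 = y.2)
      exact h.2 (Or.inl ⟨fun hfst => h.1 (Prod.ext hfst hxy), hxy⟩)⟩
  exact (IsStrictVectorColoring.top.comap snd).gtheta_one_le

end StrictVectorColoring

section GeneralizedTheta

variable [Fintype V] {G : SimpleGraph V} {k : ℕ}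

lemma trace_mul_eq_sum_sum {A X : Matrix V V ℝ} (hAG : ∀ u v, ¬G.Adj u v → A u v = 1)
    (hXG : ∀ u v, G.Adj u v → X u v = 0) : (A * X).trace = ∑ u, ∑ v, X u v := by
  simp only [trace, diag_apply, mul_apply]
  rw [Finset.sum_comm]
  refine Finset.sum_congr rfl fun u _ => Finset.sum_congr rfl fun v _ => ?_
  by_cases h : G.Adj u v
  · simp [hXG u v h]
  · simp [hAG v u fun h' => h h'.symm]

variable [DecidableEq V]

lemma sum_sum_le_gtheta {X : Matrix V V ℝ} (hX : X.PosSemidef) (hX1 : (1 - X).PosSemidef)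
    (htr : X.trace = (min k (Fintype.card V) : ℕ)) (hXG : ∀ u v, G.Adj u v → X u v = 0) :
    ∑ u, ∑ v, X u v ≤ gtheta k G :=
  le_gtheta fun _ hA hAG =>
    trace_mul_eq_sum_sum hAG hXG ▸ trace_mul_le_sumKEig hA hX hX1 htr

variable {B : Matrix V V ℝ}

lemma div_mul_sum_sum_le_gtheta (hB : B.PosSemidef) (hB1 : (1 - B).PosSemidef)
    (hBG : ∀ u v, G.Adj u v → B u v = 0) (htr : 0 < B.trace) (hkt : k ≤ B.trace)
    (hkn : k ≤ Fintype.card V) :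
    k / B.trace * ∑ u, ∑ v, B u v ≤ gtheta k G := by
  have hc0 : 0 ≤ k / B.trace := by positivity
  have hc1 : k / B.trace ≤ 1 := div_le_one_of_le₀ hkt htr.le
  have hX1 : (1 - (k / B.trace) • B).PosSemidef := by
    convert (hB1.smul hc0).add (PosSemidef.one.smul (sub_nonneg.2 hc1)) using 1
    module
  have := sum_sum_le_gtheta (k := k) (G := G) (hB.smul hc0) hX1
    (by simp [hkn, htr.ne']) (by simp +contextual [hBG])
  simpa [← Finset.mul_sum] using this

lemma card_le_gtheta (hB : B.PosSemidef) (hB1 : (1 - B).PosSemidef)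
    (hBG : ∀ u v, G.Adj u v → B u v = 0) (htk : B.trace ≤ k) (htn : B.trace ≤ Fintype.card V)
    (hcard : Fintype.card V ≤ ∑ u, ∑ v, B u v) : Fintype.card V ≤ gtheta k G := by
  set t := B.trace with ht
  set n := (Fintype.card V : ℝ) with hn
  set m := min k (Fintype.card V)
  have htm : t ≤ m := by simpa [m] using ⟨htk, htn⟩
  have hmn : m ≤ n := by simp [m, n]
  -- `(1 - β) • B + β • 1` interpolates between the traces `t` and `n`.
  set β := (m - t) / (n - t)
  have hβ0 : 0 ≤ β := div_nonneg (sub_nonneg.2 htm) (sub_nonneg.2 htn)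
  have hβ1 : 0 ≤ 1 - β :=
    sub_nonneg.2 (div_le_one_of_le₀ (by linarith) (sub_nonneg.2 htn))
  have hβ : (1 - β) * t + β * n = m := by
    have : β * (n - t) = m - t := div_mul_cancel_of_imp fun h => by linarith
    linarith
  have hX1 : (1 - ((1 - β) • B + β • 1)).PosSemidef := by
    convert hB1.smul hβ1 using 1
    module
  calc n ≤ (1 - β) * ∑ u, ∑ v, B u v + β * n := by
        linarith [mul_le_mul_of_nonneg_left hcard hβ1]
    _ = ∑ u, ∑ v, ((1 - β) • B + β • (1 : Matrix V V ℝ)) u v := by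
        simp [Finset.sum_add_distrib, Finset.mul_sum, one_apply, hn, mul_comm β]
    _ ≤ gtheta k G := sum_sum_le_gtheta ((hB.smul hβ1).add (PosSemidef.one.smul hβ0)) hX1
        (by simpa [← ht, m] using hβ) (fun u v h => by simp [hBG u v h, h.ne])

lemma IsStrictVectorColoring.min_le_gtheta [Nonempty V] {t : ℝ} {Z : Matrix V V ℝ}
    (hZ : IsStrictVectorColoring G t Z)
    (hle : ((Fintype.card V : ℝ) • 1 - (J + Z)).PosSemidef) (k : ℕ) :
    min (k * (Fintype.card V / t)) (Fintype.card V) ≤ gtheta k G := by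
  set n := (Fintype.card V : ℝ)
  have hn : 0 < n := by simp [n, Fintype.card_pos]
  have ht : 0 < t := zero_lt_one.trans_le hZ.one_le
  have htn : t ≤ n := by
    inhabit V
    simpa [hZ.diag] using hle.diag_nonneg (i := (default : V))
  set B : Matrix V V ℝ := n⁻¹ • (J + Z)
  have hB : B.PosSemidef := (posSemidef_allOnes.add hZ.posSemidef).smul (by positivity)
  have hB1 : (1 - B).PosSemidef := by
    convert hle.smul (inv_nonneg.2 hn.le) using 1
    rw [smul_sub, inv_smul_smul₀ hn.ne']
  have htr : B.trace = t := by
    calc B.trace = n * (n⁻¹ * t) := by simp [B, trace, hZ.diag, n]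
      _ = t := mul_inv_cancel_left₀ hn.ne' t
  have hBG (u v : V) (h : G.Adj u v) : B u v = 0 := by simp [B, hZ.adj h]
  have hsum : n ≤ ∑ u, ∑ v, B u v := by
    have hJZ : ∑ u, ∑ v, B u v = n + n⁻¹ * ∑ u, ∑ v, Z u v := by
      simp [B, n, ← Finset.mul_sum, Finset.sum_add_distrib]
    rw [hJZ, le_add_iff_nonneg_right]
    exact mul_nonneg (by positivity) (sum_sum_nonneg_of_posSemidef hZ.posSemidef)
  rw [← htr] at ht htn ⊢
  obtain hkt | htk := le_total (k : ℝ) B.trace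
  · calc min (k * (n / B.trace)) n ≤ k * (n / B.trace) := min_le_left _ _
      _ = k / B.trace * n := by ring
      _ ≤ k / B.trace * ∑ u, ∑ v, B u v := by gcongr
      _ ≤ gtheta k G := div_mul_sum_sum_le_gtheta hB hB1 hBG ht hkt
          (Nat.cast_le.1 (hkt.trans htn))
  · exact (min_le_right _ _).trans (card_le_gtheta hB hB1 hBG htk htn hsum)

end GeneralizedTheta

section TightColorings

namespace IsStrictVectorColoring

variable {G : SimpleGraph V} {t t' c : ℝ} {Z N E : Matrix V V ℝ}

lemma sum_sum_eq_zero [Fintype V] (hZ : IsStrictVectorColoring G t Z)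
    (hN : IsStrictVectorColoring Gᶜ t' N) (htight : t * t' = Fintype.card V) :
    ∑ u, ∑ v, N u v = 0 ∧ ∑ u, ∑ v, Z u v = 0 := by
  have hsum := hZ.sum_sum_hadamard_add hN
  rw [htight] at hsum
  have := hZ.sum_sum_hadamard_nonneg hN
  have := sum_sum_nonneg_of_posSemidef hZ.posSemidef
  have := sum_sum_nonneg_of_posSemidef hN.posSemidef
  constructor <;> linarith

lemma mul_mul_self_add [DecidableEq V] (hZ : IsStrictVectorColoring G t Z)
    (hN : IsStrictVectorColoring Gᶜ t' N) (u v : V) :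
    N u v * (Z u v * Z u v) + Z u v * Z u v =
      (if u = v then t * t' * (t - 2) else 0) + N u v + 1 := by
  have hprod := hZ.add_one_mul_add_one hN u v
  split_ifs at hprod ⊢ with huv
  · subst huv
    rw [hZ.diag] at hprod ⊢
    linear_combination (t - 2) * hprod
  · linear_combination (Z u v - 1) * hprod

lemma le_card_of_mul_self [Fintype V] [Nonempty V] (hZ : IsStrictVectorColoring G t Z)
    (hN : IsStrictVectorColoring Gᶜ t' N) (htight : t * t' = Fintype.card V) (ht : 1 < t)
    (hZZ : Z * Z = c • Z) : c ≤ Fintype.card V := by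
  classical
  set n := (Fintype.card V : ℝ)
  have hn : 0 < n := by simp [n, Fintype.card_pos]
  have hsymm (u v : V) : Z v u = Z u v := by simpa using hZ.posSemidef.isHermitian.apply u v
  have hsq : ∑ u, ∑ v, Z u v * Z u v = n * (c * (t - 1)) := by
    calc ∑ u, ∑ v, Z u v * Z u v = (Z * Z).trace := by simp [trace, mul_apply, hsymm]
      _ = n * (c * (t - 1)) := by simp [hZZ, trace, hZ.diag, n, mul_left_comm]
  have hsum : ∑ u, ∑ v, (N ⊙ (Z ⊙ Z)) u v + n * (c * (t - 1)) = n * (n * (t - 2)) + n * n := by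
    simp only [← hsq, ← Finset.sum_add_distrib, hadamard_apply, hZ.mul_mul_self_add hN, htight]
    simp [Finset.sum_add_distrib, (hZ.sum_sum_eq_zero hN htight).1, n]
  have hnonneg := sum_sum_nonneg_of_posSemidef
    (hN.posSemidef.hadamard (hZ.posSemidef.hadamard hZ.posSemidef))
  refine le_of_mul_le_mul_left ?_ (mul_pos hn (sub_pos.2 ht))
  linarith

lemma posSemidef_card_smul_one_sub [Fintype V] [DecidableEq V] [Nonempty V]
    (hZ : IsStrictVectorColoring G t (c • E)) (hN : IsStrictVectorColoring Gᶜ t' N)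
    (htight : t * t' = Fintype.card V) (ht : 1 < t) (hE : E.IsHermitian) (hEE : E * E = E) :
    ((Fintype.card V : ℝ) • 1 - (J + c • E)).PosSemidef := by
  set n := (Fintype.card V : ℝ) with hn
  have hcn : c ≤ n := hZ.le_card_of_mul_self hN htight ht (by simp [hEE])
  have hproj : (n • 1 - c • E).PosSemidef := by
    have hcompl : (1 - E).PosSemidef := posSemidef_of_isHermitian_of_mul_self
      (isHermitian_one.sub hE) (by simp [sub_mul, mul_sub, hEE])
    convert (hcompl.smul (Nat.cast_nonneg' (α := ℝ) (Fintype.card V))).add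
      ((posSemidef_of_isHermitian_of_mul_self hE hEE).smul (sub_nonneg.2 hcn)) using 1
    module
  have hZ1 : (c • E) *ᵥ 1 = 0 := by
    rw [← hZ.posSemidef.dotProduct_mulVec_zero_iff]
    simpa [dotProduct, mulVec] using (hZ.sum_sum_eq_zero hN htight).2
  have := posSemidef_sub_smul_allOnes (μ := n) hproj (by ext; simp [sub_mulVec, hZ1, smul_mulVec])
  simpa [hn, sub_sub, add_comm] using this

end IsStrictVectorColoring

end TightColorings

section Hoffman

variable [Fintype V] {G : SimpleGraph V} [DecidableRel G.Adj] {d : ℕ} {τ : ℝ}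

lemma isStrictVectorColoring_compl_hoffman [DecidableEq V] [Nonempty V]
    (hd : G.IsRegularOfDegree d) (hτ : (G.adjMatrix ℝ + τ • 1).PosSemidef) (hdτ : 0 < d + τ) :
    IsStrictVectorColoring Gᶜ (Fintype.card V * τ / (d + τ))
      ((Fintype.card V / (d + τ)) • (G.adjMatrix ℝ + τ • 1) - J) where
  posSemidef := by
    have := posSemidef_sub_smul_allOnes (μ := Fintype.card V)
      (hτ.smul (div_nonneg (Nat.cast_nonneg (Fintype.card V)) hdτ.le)) ?_
    · simpa using this
    · ext v
      simp [smul_mulVec, add_mulVec, hd v, ← mul_add, hdτ.ne']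
  diag v := by simp [mul_div_right_comm]
  adj {u v} h := by simp [h.ne, h.2]

lemma isStrictVectorColoring_of_adjMatrix_mul (hd : G.IsRegularOfDegree d) {E : Matrix V V ℝ}
    (hE : E.PosSemidef) (hGE : G.adjMatrix ℝ * E = -τ • E) {δ ε : ℝ} (hδ : ∀ v, E v v = δ)
    (hε : ∀ u v, G.Adj u v → E u v = ε) (hδ0 : 0 < δ) (hτ : 0 < τ) :
    IsStrictVectorColoring G (1 + d / τ) ((d / (τ * δ)) • E) where
  posSemidef := hE.smul (by positivity)
  diag v := by
    simp only [Matrix.smul_apply, hδ, smul_eq_mul]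
    field
  adj {u v} h := by
    have hmul : d * ε = -(τ * δ) := by
      have hvv := congrFun₂ hGE v v
      rw [SimpleGraph.adjMatrix_mul_apply, Finset.sum_congr rfl fun w hw =>
        hε w v ((G.mem_neighborFinset v w).1 hw).symm] at hvv
      simpa [hδ, hd v] using hvv
    simp only [Matrix.smul_apply, hε u v h, smul_eq_mul]
    field_simp
    linarith

end Hoffman

section Transitive

variable {G : SimpleGraph V}

lemma VertexTransitive.exists_isRegularOfDegree [G.LocallyFinite] (hvt : VertexTransitive G) :
    ∃ d, G.IsRegularOfDegree d := by
  obtain _ | ⟨⟨v⟩⟩ := isEmpty_or_nonempty V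
  · exact ⟨0, isEmptyElim⟩
  refine ⟨G.degree v, fun w => ?_⟩
  obtain ⟨φ, rfl⟩ := hvt v w
  exact φ.degree_eq v

variable {A : Matrix V V ℝ}

lemma VertexTransitive.exists_diag_eq (hvt : VertexTransitive G)
    (hA : ∀ φ : G ≃g G, A.submatrix φ φ = A) : ∃ δ, ∀ v, A v v = δ := by
  obtain _ | ⟨⟨v⟩⟩ := isEmpty_or_nonempty V
  · exact ⟨0, isEmptyElim⟩
  refine ⟨A v v, fun w => ?_⟩
  obtain ⟨φ, rfl⟩ := hvt v w
  exact congrFun₂ (hA φ) v v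

lemma EdgeTransitive.exists_eq_of_adj (het : EdgeTransitive G) (hAsymm : A.IsHermitian)
    (hA : ∀ φ : G ≃g G, A.submatrix φ φ = A) : ∃ ε, ∀ u v, G.Adj u v → A u v = ε := by
  by_cases hedge : ∃ a b, G.Adj a b
  · obtain ⟨a, b, hab⟩ := hedge
    refine ⟨A a b, fun u v huv => ?_⟩
    obtain ⟨φ, hφ⟩ := het s(a, b) hab s(u, v) huv
    have hinv : A (φ a) (φ b) = A a b := congrFun₂ (hA φ) a b
    rw [Sym2.map_mk, Sym2.eq_iff] at hφ
    obtain ⟨rfl, rfl⟩ | ⟨rfl, rfl⟩ := hφ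
    · exact hinv
    · rw [← hinv]
      simpa using hAsymm.apply (φ a) (φ b)
  · push Not at hedge
    exact ⟨0, fun u v huv => absurd huv (hedge u v)⟩

variable [Fintype V] [DecidableEq V]

lemma exists_posSemidef_adjMatrix_add [DecidableRel G.Adj] {u v : V} (huv : G.Adj u v) :
    ∃ τ > 0, -τ ∈ spectrum ℝ (G.adjMatrix ℝ) ∧ (G.adjMatrix ℝ + τ • 1).PosSemidef := by
  have hM := G.isHermitian_adjMatrix ℝ
  have : Nonempty V := ⟨u⟩
  obtain ⟨i, hi⟩ := Finite.exists_min hM.eigenvalues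
  have hpsd : (G.adjMatrix ℝ + (-hM.eigenvalues i) • 1).PosSemidef := by
    rw [neg_smul, ← sub_eq_add_neg]
    exact (posSemidef_sub_smul_one_iff hM).2 hi
  refine ⟨-hM.eigenvalues i, ?_, by simpa using hM.eigenvalues_mem_spectrum_real i, hpsd⟩
  have hτ : 2 ≤ -hM.eigenvalues i + -hM.eigenvalues i := by
    simpa [huv, huv.ne] using two_mul_abs_le_add_of_posSemidef hpsd u v
  linarith

lemma exists_eigenprojection_adjMatrix_eq [DecidableRel G.Adj] [Nonempty V]
    (het : EdgeTransitive G) (hvt : VertexTransitive G) {μ : ℝ}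
    (hμ : μ ∈ spectrum ℝ (G.adjMatrix ℝ)) :
    ∃ δ > 0, ∃ ε, (∀ v, eigenprojection (G.adjMatrix ℝ) μ v v = δ) ∧
      ∀ u v, G.Adj u v → eigenprojection (G.adjMatrix ℝ) μ u v = ε := by
  have hM := G.isHermitian_adjMatrix ℝ
  set E := eigenprojection (G.adjMatrix ℝ) μ
  have hE : E.PosSemidef :=
    posSemidef_of_isHermitian_of_mul_self isHermitian_eigenprojection eigenprojection_mul_self
  have hinv (φ : G ≃g G) : E.submatrix φ φ = E :=
    eigenprojection_submatrix (σ := φ.toEquiv) hM (φ.toEmbedding.submatrix_adjMatrix ℝ)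
  obtain ⟨δ, hδ⟩ := hvt.exists_diag_eq hinv
  obtain ⟨ε, hε⟩ := het.exists_eq_of_adj hE.isHermitian hinv
  have hδ0 : 0 ≤ δ := by
    inhabit V
    exact hδ default ▸ hE.diag_nonneg
  have hδ_ne : δ ≠ 0 := by
    rintro rfl
    exact eigenprojection_ne_zero hM hμ (hE.trace_eq_zero_iff.1 (by simp [trace, hδ]))
  exact ⟨δ, hδ0.lt_of_ne' hδ_ne, ε, hδ, hε⟩

lemma exists_isStrictVectorColoring_gtheta_le [Nonempty V] (het : EdgeTransitive G)
    (hvt : VertexTransitive G) :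
    ∃ t Z, IsStrictVectorColoring G t Z ∧ gtheta 1 G ≤ Fintype.card V / t ∧
      ((Fintype.card V : ℝ) • 1 - (J + Z)).PosSemidef := by
  classical
  by_cases hedge : ∃ u v, G.Adj u v
  · obtain ⟨u, v, huv⟩ := hedge
    obtain ⟨d, hd⟩ := hvt.exists_isRegularOfDegree
    obtain ⟨τ, hτ, hspec, hpsd⟩ := exists_posSemidef_adjMatrix_add huv
    obtain ⟨δ, hδ, ε, hdiag, hadj⟩ := exists_eigenprojection_adjMatrix_eq het hvt hspec
    have hd0 : 0 < (d : ℝ) := by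
      rw [Nat.cast_pos, ← hd u, G.degree_pos_iff_exists_adj]
      exact ⟨v, huv⟩
    have hE := isHermitian_eigenprojection (A := G.adjMatrix ℝ) (μ := -τ)
    have hEE := eigenprojection_mul_self (A := G.adjMatrix ℝ) (μ := -τ)
    have hZ := isStrictVectorColoring_of_adjMatrix_mul hd
      (posSemidef_of_isHermitian_of_mul_self hE hEE)
      (mul_eigenprojection (G.isHermitian_adjMatrix ℝ)) hdiag hadj hδ hτ
    have hN := isStrictVectorColoring_compl_hoffman hd hpsd (by positivity)
    have htight : (1 + d / τ) * (Fintype.card V * τ / (d + τ)) = Fintype.card V := by field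
    refine ⟨_, _, hZ, ?_, hZ.posSemidef_card_smul_one_sub hN htight ?_ hE hEE⟩
    · rw [← htight, mul_div_cancel_left₀ _ (by positivity)]
      exact hN.gtheta_one_le
    · exact lt_add_of_pos_right 1 (by positivity)
  · push Not at hedge
    exact ⟨1, 0, ⟨.zero, by simp, fun h => absurd h (hedge _ _)⟩,
      by simpa using gtheta_le_card 1 G, by simpa using posSemidef_card_smul_one_sub_allOnes⟩

end Transitive

end ThetaNumber

theorem stmt_13 {V : Type*} [Fintype V] [DecidableEq V] (G : SimpleGraph V)
    (n : ℕ) (hn : Fintype.card V = n)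
    (het : EdgeTransitive G) (hvt : VertexTransitive G)
    (k : ℕ) (hk : 1 ≤ k) :
    gtheta 1 (SimpleGraph.boxProd (⊤ : SimpleGraph (Fin k)) G) =
        min ((k : ℝ) * gtheta 1 G) (n : ℝ) ∧
    gtheta k G = min ((k : ℝ) * gtheta 1 G) (n : ℝ) := by
  subst hn
  obtain _ | _ := isEmpty_or_nonempty V
  · simp [gtheta_eq_zero_of_isEmpty]
  have : NeZero k := ⟨by lia⟩
  obtain ⟨t, Z, hZ, hle, hpsd⟩ := exists_isStrictVectorColoring_gtheta_le het hvt
  have htheta : gtheta 1 G = Fintype.card V / t :=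
    hle.antisymm ((div_le_iff₀' (zero_lt_one.trans_le hZ.one_le)).2 hZ.card_le_mul_gtheta)
  constructor <;> refine le_antisymm (le_min ?_ ?_) ?_
  · simpa using gtheta_top_boxProd_le_mul (W := Fin k) G
  · exact gtheta_top_boxProd_le_card G
  · simpa [htheta] using hZ.min_le_gtheta_top_boxProd (W := Fin k)
  · exact gtheta_le_mul_gtheta_one k G
  · exact gtheta_le_card k G
  · simpa only [htheta] using hZ.min_le_gtheta hpsd k
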